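/- Let f ∈ Γ₀(H), let x ∈ H, and define Φ: [0,+∞) → (−∞,+∞] by Φ(γ) = f(prox_{γ⊙f} x). Let μ ∈ [0,+∞) and γ ∈ (μ,+∞). Then, in the extended reals, Φ(γ) ≤ Φ(μ) − ‖prox_{μ⊙f} x − prox_{γf} x‖²/(γ − μ). -/

import Mathlib

open scoped Classical

noncomputable section

/-- Effective domain of an extended-real-valued function. -/
def edom {E : Type*} (f : E → EReal) : Set E := {x | f x < ⊤}

/-- Convexity of an extended-real-valued function, via its epigraph. -/
def ConvexEpi {E : Type*} [AddCommGroup E] [Module ℝ E] (f : E → EReal) : Prop :=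
  Convex ℝ {p : E × ℝ | f p.1 ≤ (p.2 : EReal)}

/-- `f ∈ Γ₀(E)`: proper, lower semicontinuous, convex, with values in `(-∞, +∞]`. -/
def IsGamma0 {E : Type*} [AddCommGroup E] [Module ℝ E] [TopologicalSpace E]
    (f : E → EReal) : Prop :=
  (∃ x, f x ≠ ⊤) ∧ (∀ x, f x ≠ ⊥) ∧ LowerSemicontinuous f ∧ ConvexEpi f

/-- Proximity operator: the (unique, for `f ∈ Γ₀`) minimizer of
`y ↦ f y + ‖x - y‖² / 2`. -/
def prox {E : Type*} [NormedAddCommGroup E] [InnerProductSpace ℝ E]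
    (f : E → EReal) (x : E) : E :=
  Classical.epsilon fun p =>
    ∀ y, f p + ((‖x - p‖ ^ 2 / 2 : ℝ) : EReal) ≤ f y + ((‖x - y‖ ^ 2 / 2 : ℝ) : EReal)

/-- Metric projection onto a set. -/
def projC {E : Type*} [NormedAddCommGroup E] (C : Set E) (x : E) : E :=
  Classical.epsilon fun p => p ∈ C ∧ ∀ y ∈ C, ‖x - p‖ ≤ ‖x - y‖

/-- Fenchel conjugate. -/
def fconj {E : Type*} [NormedAddCommGroup E] [InnerProductSpace ℝ E]
    (f : E → EReal) (y : E) : EReal :=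
  ⨆ x, ((inner ℝ x y : ℝ) : EReal) - f x

/-- Plain scalar multiple `ξ·f`. -/
def smulE {E : Type*} (ξ : ℝ) (f : E → EReal) : E → EReal := fun x => (ξ : EReal) * f x

/-- The operation `ξ ⊙ f`: indicator of `cl (dom f)` if `ξ = 0`, and `ξ·f` if `ξ > 0`. -/
def rscale {E : Type*} [TopologicalSpace E] (ξ : ℝ) (f : E → EReal) : E → EReal :=
  if ξ = 0 then fun x => if x ∈ closure (edom f) then (0 : EReal) else ⊤
  else fun x => (ξ : EReal) * f x

/-- `f^∨`: agrees with `f` where `-∞ < f < 0`, and is `+∞` elsewhere. -/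
def pbas {E : Type*} (f : E → EReal) : E → EReal :=
  fun x => if ⊥ < f x ∧ f x < 0 then f x else ⊤

/-- `f^∧`: agrees with `f` where `0 < f < +∞`, and is `+∞` elsewhere. -/
def phaut {E : Type*} (f : E → EReal) : E → EReal :=
  fun x => if 0 < f x ∧ f x < ⊤ then f x else ⊤

/-- `f_▽ = (f^∨)**`. -/
def basEnv {E : Type*} [NormedAddCommGroup E] [InnerProductSpace ℝ E]
    (f : E → EReal) : E → EReal :=
  fconj (fconj (pbas f))

/-- `f_▲ = (f^∧)**`. -/
def hautEnv {E : Type*} [NormedAddCommGroup E] [InnerProductSpace ℝ E]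
    (f : E → EReal) : E → EReal :=
  fconj (fconj (phaut f))

/-- `S = s⁻¹((0, +∞))`. -/
def sdom {G : Type*} (s : G → EReal) : Set G := {v | 0 < s v ∧ s v < ⊤}

/-- The preperspective `φ ⋉ s`, on the Hilbert direct sum `H ⊕ G`. -/
def prePersp {H G : Type*} [NormedAddCommGroup H] [InnerProductSpace ℝ H]
    [NormedAddCommGroup G] [InnerProductSpace ℝ G]
    (φ : H → EReal) (s : G → EReal) : WithLp 2 (H × G) → EReal := fun q =>
  if 0 < s ((WithLp.equiv 2 (H × G)) q).2 ∧ s ((WithLp.equiv 2 (H × G)) q).2 < ⊤ then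
    s ((WithLp.equiv 2 (H × G)) q).2 *
      φ ((s ((WithLp.equiv 2 (H × G)) q).2).toReal⁻¹ • ((WithLp.equiv 2 (H × G)) q).1)
  else ⊤

/-- The perspective `φ ▷ s`: the largest lower semicontinuous convex minorant of the
preperspective `φ ⋉ s`, on the Hilbert direct sum `H ⊕ G`. -/
def persp {H G : Type*} [NormedAddCommGroup H] [InnerProductSpace ℝ H]
    [NormedAddCommGroup G] [InnerProductSpace ℝ G]
    (φ : H → EReal) (s : G → EReal) : WithLp 2 (H × G) → EReal := fun q =>
  sSup {t : EReal | ∃ g : WithLp 2 (H × G) → EReal,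
    LowerSemicontinuous g ∧ ConvexEpi g ∧ (∀ r, g r ≤ prePersp φ s r) ∧ t = g q}

/-- The point `(x, y)` in the Hilbert direct sum `H ⊕ G`. -/
def pairHG {H G : Type*} (x : H) (y : G) : WithLp 2 (H × G) :=
  (WithLp.equiv 2 (H × G)).symm (x, y)

end

/-- Convexity of the finite part of `f`. -/
lemma g0_convexOn {H : Type*} [NormedAddCommGroup H] [InnerProductSpace ℝ H]
    (f : H → EReal) (hf : IsGamma0 f) : ConvexOn ℝ (edom f) (fun y => (f y).toReal) := by
  obtain ⟨-, hb, -, hc⟩ := hf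
  have key : ∀ u ∈ edom f, ∀ v ∈ edom f, ∀ a b : ℝ, 0 ≤ a → 0 ≤ b → a + b = 1 →
      f (a • u + b • v) ≤ ((a * (f u).toReal + b * (f v).toReal : ℝ) : EReal) := by
    intro u hu v hv a b ha hb' hab
    have h1 : (u, (f u).toReal) ∈ {p : H × ℝ | f p.1 ≤ (p.2 : EReal)} := by
      simp only [Set.mem_ofPred_eq]
      exact EReal.le_coe_toReal (ne_of_lt hu)
    have h2 : (v, (f v).toReal) ∈ {p : H × ℝ | f p.1 ≤ (p.2 : EReal)} := by
      simp only [Set.mem_ofPred_eq]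
      exact EReal.le_coe_toReal (ne_of_lt hv)
    exact hc h1 h2 ha hb' hab
  refine ⟨?_, ?_⟩
  · intro u hu v hv a b ha hb' hab
    exact lt_of_le_of_lt (key u hu v hv a b ha hb' hab) (EReal.coe_lt_top _)
  · intro u hu v hv a b ha hb' hab
    have := EReal.toReal_le_toReal (key u hu v hv a b ha hb' hab) (hb _) (EReal.coe_ne_top _)
    rwa [EReal.toReal_coe] at this

/-- Variational inequality for a minimizer. -/
lemma g0_vi {H : Type*} [NormedAddCommGroup H] [InnerProductSpace ℝ H]
    (C : Set H) (h : H → ℝ) (hh : ConvexOn ℝ C h) (x p : H) (hp : p ∈ C)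
    (hmin : ∀ y ∈ C, h p + ‖x - p‖ ^ 2 / 2 ≤ h y + ‖x - y‖ ^ 2 / 2) (y : H) (hy : y ∈ C) :
    h p + inner ℝ (x - p) (y - p) ≤ h y := by
  have key : ∀ t : ℝ, 0 < t → t ≤ 1 →
      h p + inner ℝ (x - p) (y - p) ≤ h y + t * (‖y - p‖ ^ 2 / 2) := by
    intro t ht ht1
    have h1 := hh.2 hp hy (by linarith : 0 ≤ 1 - t) ht.le (by ring)
    have h2 := hmin _ (hh.1 hp hy (by linarith : 0 ≤ 1 - t) ht.le (by ring))
    have e : x - ((1 - t) • p + t • y) = (x - p) - t • (y - p) := by module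
    rw [e, norm_sub_sq_real (x - p) (t • (y - p)), inner_smul_right, norm_smul, mul_pow, Real.norm_eq_abs, sq_abs] at h2
    simp only [smul_eq_mul] at h1
    have : t * (h p + inner ℝ (x - p) (y - p)) ≤ t * (h y + t * (‖y - p‖ ^ 2 / 2)) := by
      nlinarith
    exact le_of_mul_le_mul_left this ht
  refine le_of_forall_pos_le_add fun ε hε => ?_
  have hN : 0 ≤ ‖y - p‖ ^ 2 / 2 := by positivity
  set N := ‖y - p‖ ^ 2 / 2
  have ht : 0 < min 1 (ε / (N + 1)) := lt_min one_pos (by positivity)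
  have := key _ ht (min_le_left _ _)
  have h3 : min 1 (ε / (N + 1)) * N ≤ ε := by
    calc _ ≤ ε / (N + 1) * (N + 1) :=
          mul_le_mul (min_le_right _ _) (by linarith) hN (by positivity)
      _ = ε := by field_simp
  linarith

/-- A function in `Γ₀` has an affine-in-norm lower bound. -/
lemma g0_lower {H : Type*} [NormedAddCommGroup H] [InnerProductSpace ℝ H]
    (f : H → EReal) (hf : IsGamma0 f) :
    ∃ x₀ ∈ edom f, ∃ c r : ℝ, 0 ≤ r ∧ ∀ y ∈ edom f, c - r * ‖y - x₀‖ ≤ (f y).toReal := by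
  have hcv := g0_convexOn f hf
  obtain ⟨⟨x₀, hx₀⟩, hb, hl, -⟩ := hf
  have hx₀D : x₀ ∈ edom f := lt_top_iff_ne_top.2 hx₀
  set g : H → ℝ := fun y => (f y).toReal with hg
  have hlt : ((g x₀ - 1 : ℝ) : EReal) < f x₀ := by
    conv_rhs => rw [← EReal.coe_toReal hx₀ (hb x₀)]
    exact_mod_cast sub_one_lt (g x₀)
  obtain ⟨r, hr, hball⟩ := Metric.eventually_nhds_iff.1 (hl x₀ _ hlt)
  have hball' : ∀ z ∈ edom f, ‖z - x₀‖ < r → g x₀ - 1 ≤ g z := by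
    intro z hz hzr
    have h1 := hball (y := z) (by rwa [dist_eq_norm])
    have := EReal.toReal_le_toReal h1.le (EReal.coe_ne_bot _) (ne_of_lt hz)
    rwa [EReal.toReal_coe] at this
  refine ⟨x₀, hx₀D, g x₀ - 1, 2 / r, by positivity, fun y hy => ?_⟩
  change _ ≤ g y
  by_cases hyr : ‖y - x₀‖ < r
  · have := hball' y hy hyr
    have : 0 ≤ 2 / r * ‖y - x₀‖ := by positivity
    linarith
  · push Not at hyr
    have hn : 0 < ‖y - x₀‖ := lt_of_lt_of_le hr hyr
    set n := ‖y - x₀‖ with hn_def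
    have ht : 0 < r / (2 * n) := by positivity
    have ht1 : r / (2 * n) ≤ 1 := by rw [div_le_one (by positivity)]; linarith
    set t := r / (2 * n) with ht_def
    have hz := hcv.1 hx₀D hy (by linarith : 0 ≤ 1 - t) ht.le (by ring)
    have h1 := hcv.2 hx₀D hy (by linarith : 0 ≤ 1 - t) ht.le (by ring)
    have e : ((1 - t) • x₀ + t • y) - x₀ = t • (y - x₀) := by module
    have htn : t * n = r / 2 := by rw [ht_def]; field_simp
    have h2 := hball' _ hz (by
      rw [e, norm_smul, Real.norm_eq_abs, abs_of_pos ht, ← hn_def, htn]; linarith)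
    simp only [smul_eq_mul] at h1
    change g _ ≤ (1 - t) * g x₀ + t * g y at h1
    have h3 : -1 ≤ t * (g y - g x₀) := by linarith
    have h4 : t * (2 / r * n) = 1 := by
      rw [ht_def]; field_simp
    have h5 : t * (g x₀ - (2 / r * n)) ≤ t * g y := by nlinarith
    have := le_of_mul_le_mul_left h5 ht
    linarith

/-- Existence of the real minimizer. -/
lemma g0_exists {H : Type*} [NormedAddCommGroup H] [InnerProductSpace ℝ H] [CompleteSpace H]
    (f : H → EReal) (hf : IsGamma0 f) (x : H) (κ : ℝ) (hκ : 0 < κ) :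
    ∃ p ∈ edom f, ∀ y ∈ edom f, κ * (f p).toReal + ‖x - p‖ ^ 2 / 2 ≤
      κ * (f y).toReal + ‖x - y‖ ^ 2 / 2 := by
  have hcv := g0_convexOn f hf
  obtain ⟨x₀, hx₀, c, r, hr, hlow⟩ := g0_lower f hf
  obtain ⟨-, hb, hl, -⟩ := hf
  set F : H → ℝ := fun y => κ * (f y).toReal + ‖x - y‖ ^ 2 / 2 with hF
  have hbdd : BddBelow (F '' edom f) := by
    refine ⟨κ * (c - r * ‖x - x₀‖) - (κ * r) ^ 2 / 2, ?_⟩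
    rintro _ ⟨y, hy, rfl⟩
    have h1 := mul_le_mul_of_nonneg_left (hlow y hy) hκ.le
    have h2 : ‖y - x₀‖ ≤ ‖x - y‖ + ‖x - x₀‖ := by
      rw [norm_sub_rev x y]; exact norm_sub_le_norm_sub_add_norm_sub _ _ _
    have h3 := mul_le_mul_of_nonneg_left h2 (mul_nonneg hκ.le hr)
    simp only [hF]
    nlinarith [sq_nonneg (‖x - y‖ - κ * r)]
  have hne : (F '' edom f).Nonempty := ⟨_, x₀, hx₀, rfl⟩
  set m := sInf (F '' edom f) with hm
  have hmle : ∀ y ∈ edom f, m ≤ F y := fun y hy => csInf_le hbdd ⟨y, hy, rfl⟩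
  have hex : ∀ n : ℕ, ∃ y ∈ edom f, F y < m + 1 / ((n : ℝ) + 1) := by
    intro n
    obtain ⟨_, ⟨y, hy, rfl⟩, h⟩ := exists_lt_of_csInf_lt hne
      (show m < m + 1 / ((n : ℝ) + 1) by
        have : 0 < 1 / ((n : ℝ) + 1) := by positivity
        linarith)
    exact ⟨y, hy, h⟩
  choose u huD hu using hex
  have hmid : ∀ a ∈ edom f, ∀ b ∈ edom f, ‖a - b‖ ^ 2 ≤ 4 * (F a + F b - 2 * m) := by
    intro a ha b hb'
    have h0 := hmle _ (hcv.1 ha hb' (by norm_num : (0:ℝ) ≤ 1/2) (by norm_num : (0:ℝ) ≤ 1/2)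
      (by norm_num))
    have h1 := hcv.2 ha hb' (by norm_num : (0:ℝ) ≤ 1/2) (by norm_num : (0:ℝ) ≤ 1/2)
      (by norm_num)
    simp only [smul_eq_mul] at h1
    have e1 : x - ((1/2:ℝ) • a + (1/2:ℝ) • b) = (1/2:ℝ) • ((x - a) + (x - b)) := by module
    have e2 : ‖a - b‖ = ‖(x - a) - (x - b)‖ := by rw [norm_sub_rev a b]; congr 1; abel
    have e3 := parallelogram_law_with_norm ℝ (x - a) (x - b)
    simp only [hF] at h0 ⊢
    rw [e1, norm_smul, mul_pow] at h0
    norm_num at h0 h1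
    rw [e2]
    nlinarith [mul_le_mul_of_nonneg_left h1 hκ.le]
  have hlim0 : Filter.Tendsto (fun n : ℕ => 1 / ((n : ℝ) + 1)) Filter.atTop (nhds 0) :=
    tendsto_one_div_add_atTop_nhds_zero_nat
  have hcau : CauchySeq u := by
    refine cauchySeq_of_le_tendsto_0 (fun n : ℕ => Real.sqrt (8 * (1 / ((n : ℝ) + 1)))) ?_ ?_
    · intro n k N hn hk
      rw [dist_eq_norm]
      apply Real.le_sqrt_of_sq_le
      have h1 := hmid _ (huD n) _ (huD k)
      have h2 := hu n
      have h3 := hu k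
      have h4 : 1 / ((n : ℝ) + 1) ≤ 1 / ((N : ℝ) + 1) := Nat.one_div_le_one_div hn
      have h5 : 1 / ((k : ℝ) + 1) ≤ 1 / ((N : ℝ) + 1) := Nat.one_div_le_one_div hk
      linarith
    · have := (hlim0.const_mul 8).sqrt
      simpa using this
  obtain ⟨p, hp⟩ := cauchySeq_tendsto_of_complete hcau
  have hfp : f p ≤ (((m - ‖x - p‖ ^ 2 / 2) / κ : ℝ) : EReal) := by
    by_contra hcon
    push Not at hcon
    obtain ⟨a, ha1, ha2⟩ := EReal.lt_iff_exists_real_btwn.1 hcon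
    have hev := hp.eventually (hl p _ ha2)
    have hle : κ * a + ‖x - p‖ ^ 2 / 2 ≤ m + 0 := by
      refine le_of_tendsto_of_tendsto
        (f := fun n => κ * a + ‖x - u n‖ ^ 2 / 2) (g := fun n : ℕ => m + 1 / ((n : ℝ) + 1))
        ?_ (hlim0.const_add m) ?_
      · exact ((((hp.const_sub x).norm).pow 2).div_const 2).const_add _
      · filter_upwards [hev] with n hn
        have h1 := EReal.toReal_le_toReal hn.le (EReal.coe_ne_bot _) (ne_of_lt (huD n))
        rw [EReal.toReal_coe] at h1
        have h2 := hu n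
        simp only [hF] at h2
        have := mul_le_mul_of_nonneg_left h1 hκ.le
        linarith
    have ha1' : (m - ‖x - p‖ ^ 2 / 2) / κ < a := by exact_mod_cast ha1
    rw [div_lt_iff₀ hκ] at ha1'
    linarith
  have hpD : p ∈ edom f := lt_of_le_of_lt hfp (EReal.coe_lt_top _)
  refine ⟨p, hpD, fun y hy => ?_⟩
  have h1 := EReal.toReal_le_toReal hfp (hb p) (EReal.coe_ne_top _)
  rw [EReal.toReal_coe, le_div_iff₀ hκ] at h1
  have := hmle y hy
  simp only [hF] at this
  linarith

/-- The prox of `κ·f` is the real minimizer. -/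
lemma g0_prox {H : Type*} [NormedAddCommGroup H] [InnerProductSpace ℝ H] [CompleteSpace H]
    (f : H → EReal) (hf : IsGamma0 f) (x : H) (κ : ℝ) (hκ : 0 < κ) :
    prox (smulE κ f) x ∈ edom f ∧ ∀ y ∈ edom f,
      κ * (f (prox (smulE κ f) x)).toReal + ‖x - prox (smulE κ f) x‖ ^ 2 / 2 ≤
      κ * (f y).toReal + ‖x - y‖ ^ 2 / 2 := by
  have hval : ∀ y ∈ edom f, smulE κ f y + ((‖x - y‖ ^ 2 / 2 : ℝ) : EReal) =
      ((κ * (f y).toReal + ‖x - y‖ ^ 2 / 2 : ℝ) : EReal) := by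
    intro y hy
    rw [EReal.coe_add, EReal.coe_mul, EReal.coe_toReal (ne_of_lt hy) (hf.2.1 y)]
    rfl
  have htop : ∀ y, y ∉ edom f → smulE κ f y + ((‖x - y‖ ^ 2 / 2 : ℝ) : EReal) = ⊤ := by
    intro y hy
    have : f y = ⊤ := by
      by_contra h
      exact hy (lt_top_iff_ne_top.2 h)
    rw [smulE, this, EReal.coe_mul_top_of_pos hκ, EReal.top_add_coe]
  obtain ⟨p, hpD, hp⟩ := g0_exists f hf x κ hκ
  have hspec : ∀ y, smulE κ f (prox (smulE κ f) x) +
      ((‖x - prox (smulE κ f) x‖ ^ 2 / 2 : ℝ) : EReal) ≤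
      smulE κ f y + ((‖x - y‖ ^ 2 / 2 : ℝ) : EReal) := by
    refine Classical.epsilon_spec (p := fun p => ∀ y, smulE κ f p +
      ((‖x - p‖ ^ 2 / 2 : ℝ) : EReal) ≤ smulE κ f y + ((‖x - y‖ ^ 2 / 2 : ℝ) : EReal))
      ⟨p, fun y => ?_⟩
    by_cases hy : y ∈ edom f
    · rw [hval p hpD, hval y hy]
      exact_mod_cast hp y hy
    · rw [htop y hy]; exact le_top
  have hD : prox (smulE κ f) x ∈ edom f := by
    by_contra h
    have := hspec p
    rw [htop _ h, hval p hpD] at this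
    exact absurd this (not_le.2 (EReal.coe_lt_top _))
  refine ⟨hD, fun y hy => ?_⟩
  have := hspec y
  rw [hval _ hD, hval y hy] at this
  exact_mod_cast this

/-- The case of the projection. -/
lemma g0_proj {H : Type*} [NormedAddCommGroup H] [InnerProductSpace ℝ H] [CompleteSpace H]
    (f : H → EReal) (hf : IsGamma0 f) (x : H) :
    ∀ y ∈ edom f, ‖x - prox (rscale 0 f) x‖ ^ 2 / 2 ≤ ‖x - y‖ ^ 2 / 2 := by
  have hcv := g0_convexOn f hf
  obtain ⟨x₀, hx₀⟩ := hf.1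
  have hx₀D : x₀ ∈ closure (edom f) := subset_closure (lt_top_iff_ne_top.2 hx₀)
  have hval : ∀ y ∈ closure (edom f), rscale 0 f y = 0 := by
    intro y hy; simp [rscale, hy]
  have htop : ∀ y, y ∉ closure (edom f) → rscale 0 f y = ⊤ := by
    intro y hy; simp [rscale, hy]
  obtain ⟨p, hpD, hp⟩ := exists_norm_eq_iInf_of_complete_convex ⟨x₀, hx₀D⟩
    isClosed_closure.isComplete hcv.1.closure x
  have hp' : ∀ y ∈ closure (edom f), ‖x - p‖ ≤ ‖x - y‖ := by
    intro y hy
    rw [hp]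
    exact ciInf_le ⟨0, by rintro _ ⟨z, rfl⟩; exact norm_nonneg _⟩
      (⟨y, hy⟩ : closure (edom f))
  have hspec : ∀ y, rscale 0 f (prox (rscale 0 f) x) +
      ((‖x - prox (rscale 0 f) x‖ ^ 2 / 2 : ℝ) : EReal) ≤
      rscale 0 f y + ((‖x - y‖ ^ 2 / 2 : ℝ) : EReal) := by
    refine Classical.epsilon_spec (p := fun p => ∀ y, rscale 0 f p +
      ((‖x - p‖ ^ 2 / 2 : ℝ) : EReal) ≤ rscale 0 f y + ((‖x - y‖ ^ 2 / 2 : ℝ) : EReal))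
      ⟨p, fun y => ?_⟩
    by_cases hy : y ∈ closure (edom f)
    · rw [hval p hpD, hval y hy, zero_add, zero_add]
      have := hp' y hy
      have h : ‖x - p‖ ^ 2 / 2 ≤ ‖x - y‖ ^ 2 / 2 := by gcongr
      exact_mod_cast h
    · rw [htop y hy, EReal.top_add_coe]; exact le_top
  have hD : prox (rscale 0 f) x ∈ closure (edom f) := by
    by_contra h
    have := hspec p
    rw [htop _ h, hval p hpD, EReal.top_add_coe, zero_add] at this
    exact absurd this (not_le.2 (EReal.coe_lt_top _))
  intro y hy
  have := hspec y
  rw [hval _ hD, hval y (subset_closure hy), zero_add, zero_add] at this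
  exact_mod_cast this

/-- Lemma 3.3(i). -/
theorem stmt4 {H : Type*} [NormedAddCommGroup H] [InnerProductSpace ℝ H] [CompleteSpace H]
    (f : H → EReal) (hf : IsGamma0 f) (x : H) (μ γ : ℝ) (hμ : 0 ≤ μ) (hγ : μ < γ) :
    f (prox (rscale γ f) x) ≤
      f (prox (rscale μ f) x) -
        ((‖prox (rscale μ f) x - prox (smulE γ f) x‖ ^ 2 / (γ - μ) : ℝ) : EReal) := by
  have hγ0 : 0 < γ := lt_of_le_of_lt hμ hγ
  have hrs : ∀ κ : ℝ, 0 < κ → rscale κ f = smulE κ f := by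
    intro κ hκ
    unfold rscale
    rw [if_neg hκ.ne']
    rfl
  rw [hrs γ hγ0]
  have hcv := g0_convexOn f hf
  obtain ⟨hpD, hp⟩ := g0_prox f hf x γ hγ0
  have hq : ∀ y ∈ edom f,
      μ * (f (prox (rscale μ f) x)).toReal + ‖x - prox (rscale μ f) x‖ ^ 2 / 2 ≤
      μ * (f y).toReal + ‖x - y‖ ^ 2 / 2 := by
    rcases hμ.eq_or_lt with h | h
    · subst h
      intro y hy
      have := g0_proj f hf x y hy
      linarith
    · rw [hrs μ h]
      exact (g0_prox f hf x μ h).2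
  generalize prox (smulE γ f) x = p at *
  generalize prox (rscale μ f) x = q at *
  by_cases hqD : q ∈ edom f
  · have h1 := g0_vi (edom f) (fun y => γ * (f y).toReal) (hcv.smul hγ0.le) x p hpD hp q hqD
    have h2 := g0_vi (edom f) (fun y => μ * (f y).toReal) (hcv.smul hμ) x q hqD hq p hpD
    have e : inner ℝ (x - p) (q - p) + inner ℝ (x - q) (p - q) = ‖q - p‖ ^ 2 := by
      rw [← real_inner_self_eq_norm_sq]
      simp only [inner_sub_left, inner_sub_right]
      rw [real_inner_comm p q]
      ring
    rw [← EReal.coe_toReal (ne_of_lt hpD) (hf.2.1 p),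
      ← EReal.coe_toReal (ne_of_lt hqD) (hf.2.1 q), ← EReal.coe_sub]
    have hd : 0 < γ - μ := by linarith
    have : (f p).toReal ≤ (f q).toReal - ‖q - p‖ ^ 2 / (γ - μ) := by
      rw [le_sub_iff_add_le, ← le_sub_iff_add_le', div_le_iff₀ hd]
      nlinarith
    exact_mod_cast this
  · have : f q = ⊤ := by
      by_contra h
      exact hqD (lt_top_iff_ne_top.2 h)
    rw [this, EReal.top_sub_coe]
    exact le_top
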